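/- arXiv:1205.3268 — 3 statements merged into one kernel-verified Lean document; each statement's English description precedes it below -/
import Mathlib

section
/- Let Q be a finite quiver on n vertices with no oriented cycles, and let σ be an automorphism of Q (a permutation of the vertex set together with a compatible permutation of the arrows, preserving sources and targets). Then there exists a bijective labelling of the vertices of Q by the integers {1, …, n} such that: (1) for every arrow a of Q, the label of the source of a is strictly smaller than the label of the target of a; and (2) the labels assigned to any σ-orbit of vertices form a set of consecutive integers. -/
/-!
The arrow relation of a finite acyclic quiver is well founded, so each vertex has a rank. The rank
strictly increases along arrows and, because `σ` is an automorphism of the arrow relation, it is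
constant on `σ`-orbits. Sorting the vertices lexicographically by rank, then by orbit, then
arbitrarily, gives the labelling: arrows increase the first coordinate, and an orbit is an
interval, being the set of vertices with a given pair (rank, orbit).
-/

theorem wellFounded_arrow {V : Type*} [Finite V] [Quiver.{u_a + 1} V]
    (hacyclic : ∀ (v : V) (p : Quiver.Path v v), p.length = 0) :
    WellFounded fun i j : V => Nonempty (i ⟶ j) := by
  have hpath : ∀ i j : V, Relation.TransGen (fun i j : V => Nonempty (i ⟶ j)) i j →
      ∃ p : Quiver.Path i j, 0 < p.length := by
    intro i j h
    induction h with
    | single h => exact ⟨h.some.toPath, by simp [Quiver.Hom.toPath]⟩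
    | tail _ h ih => exact ⟨ih.choose.cons h.some, by simp⟩
  have : Std.Irrefl (Relation.TransGen fun i j : V => Nonempty (i ⟶ j)) := ⟨fun v h => by
    obtain ⟨p, hp⟩ := hpath v v h
    exact hp.ne' (hacyclic v p)⟩
  exact Subrelation.wf (fun h => Relation.TransGen.single h) (Finite.wellFounded_of_trans_of_irrefl
    (Relation.TransGen fun i j : V => Nonempty (i ⟶ j)))

/-- Well-founded induction on `v`: since `σ` is bijective, the `r`-predecessors of `σ v` are exactly
the images of those of `v`. -/
theorem rank_apply_perm {V : Type*} {r : V → V → Prop} [IsWellFounded V r]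
    (σ : Equiv.Perm V) (hσ : ∀ i j, r i j ↔ r (σ i) (σ j)) (v : V) :
    IsWellFounded.rank r (σ v) = IsWellFounded.rank r v := by
  induction v using (IsWellFounded.wf (r := r)).induction with
  | _ v ih =>
    apply le_antisymm
    · rw [IsWellFounded.rank_eq r (σ v)]
      refine Ordinal.iSup_le fun ⟨b, hb⟩ => Order.succ_le_of_lt ?_
      obtain ⟨a, rfl⟩ := σ.surjective b
      have ha := (hσ a v).2 hb
      rw [ih a ha]
      exact IsWellFounded.rank_lt_of_rel ha
    · rw [IsWellFounded.rank_eq r v]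
      refine Ordinal.iSup_le fun ⟨a, ha⟩ => Order.succ_le_of_lt ?_
      rw [← ih a ha]
      exact IsWellFounded.rank_lt_of_rel ((hσ a v).1 ha)

/-- **Existence of an orientation-compatible labelling with consecutive σ-orbits.**
Let `Q` be a finite quiver on `n` vertices with no oriented cycles, and let `σ` be an
automorphism of `Q` (a permutation `σ` of the vertices together with compatible
bijections of arrow sets).  Then the vertices can be labelled bijectively by
`Fin n` so that every arrow goes from a smaller label to a bigger label, and the
labels of every `σ`-orbit of vertices form a consecutive set of integers. -/
theorem exists_labelling_of_quiver_automorphism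
    (V : Type*) [Fintype V] [Quiver.{u_a + 1} V]
    (hacyclic : ∀ (v : V) (p : Quiver.Path v v), p.length = 0)
    (σ : Equiv.Perm V)
    (σarrows : ∀ i j : V, (i ⟶ j) ≃ (σ i ⟶ σ j)) :
    ∃ f : V ≃ Fin (Fintype.card V),
      (∀ i j : V, (i ⟶ j) → f i < f j) ∧
      (∀ v x y : V, σ.SameCycle v x → σ.SameCycle v y →
        ∀ l : Fin (Fintype.card V), f x ≤ l → l ≤ f y →
          ∃ z : V, σ.SameCycle v z ∧ f z = l) := by
  let r : V → V → Prop := fun i j => Nonempty (i ⟶ j)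
  have : IsWellFounded V r := ⟨wellFounded_arrow hacyclic⟩
  have hrank : ∀ x y : V, σ.SameCycle x y → IsWellFounded.rank r x = IsWellFounded.rank r y := by
    intro x y h
    obtain ⟨i, rfl⟩ := h.exists_nat_pow_eq
    induction i with
    | zero => rfl
    | succ i ih =>
      rw [pow_succ', Equiv.Perm.mul_apply, rank_apply_perm (r := r) σ
        fun i j => (σarrows i j).nonempty_congr]
      exact ih ⟨i, by simp⟩
  let e := Fintype.equivFin V
  let s := Equiv.Perm.SameCycle.setoid σ
  -- The orbit of `v` is indexed by the position of a chosen representative.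
  let orbitIndex : V → Fin (Fintype.card V) := fun v => e (Quotient.mk s v).out
  have horbit : ∀ x y : V, orbitIndex x = orbitIndex y ↔ σ.SameCycle x y := fun x y =>
    e.injective.eq_iff.trans (Quotient.out_inj.trans Quotient.eq)
  let key : V → Ordinal ×ₗ Fin (Fintype.card V) ×ₗ Fin (Fintype.card V) :=
    fun v => toLex (IsWellFounded.rank r v, toLex (orbitIndex v, e v))
  have hkey : Function.Injective key := fun x y h =>
    e.injective (congrArg (fun k => (ofLex (ofLex k).2).2) h)
  let _ : LinearOrder V := LinearOrder.lift' key hkey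
  let f := (monoEquivOfFin V rfl).symm
  refine ⟨f.toEquiv, fun i j a => ?_, fun v x y hx hy l hxl hly => ?_⟩
  · refine f.lt_iff_lt.2 (show key i < key j from ?_)
    exact Prod.Lex.toLex_lt_toLex.2 (Or.inl (IsWellFounded.rank_lt_of_rel (r := r) ⟨a⟩))
  · obtain ⟨z, rfl⟩ := f.surjective l
    refine ⟨z, ?_, rfl⟩
    have hxz : key x ≤ key z := f.le_iff_le.1 hxl
    have hzy : key z ≤ key y := f.le_iff_le.1 hly
    have hxy := hx.symm.trans hy
    have hr := hrank x y hxy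
    have ho := (horbit x y).2 hxy
    simp only [key, Prod.Lex.toLex_le_toLex] at hxz hzy
    -- `x` and `y` share the coordinates (rank, orbit), so anything between them shares these too.
    refine hx.trans ((horbit x z).1 ?_)
    grind
end

section
/- Fix integers n ≥ 1 and 1 ≤ k ≤ n, and let W be the symmetric group S_{n+1} with simple generators s_1, …, s_n the adjacent transpositions. Let λ = (λ_1 ≥ λ_2 ≥ ⋯ ≥ λ_k ≥ 0) be a partition with λ_1 ≤ n−k+1, with boxes {(r,c) : 1 ≤ r ≤ k, 1 ≤ c ≤ λ_r}, where box (r,c) carries the letter s_{k−r+c}; reading the letters of the boxes row by row from top to bottom, left to right within each row, yields a reduced word u_λ for a k-Grassmannian permutation w. For a subset J of the boxes of λ, let u_J be the subword of u_λ obtained by reading the letters of the boxes in J in the same row-reading order. Then u_J is a reduced word and J is the leftmost (lexicographically first in row-reading order, among all subsets of boxes whose row-reading word is a reduced word for the same permutation) reduced subword for the permutation it represents, if and only if J contains no bad ⌶, i.e., there is no box (r,c) ∈ J together with a box (r′,c) of λ with r′ < r not in J and a box (r,c′) of λ with c′ < c not in J. -/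
/-!
Write `v_b` for the product of the letters of the boxes of `J` strictly after the box `b` in reading
order. The set `J` is a leftmost reduced subword exactly when no letter `s_b`, for `b` any box of
`λ`, in `J` or not, is a left descent of `v_b` (`AscentAt`). For `b ∈ J` this says that the word of
`J` is reduced (`ascending_iff`, `isReducedWord_iff_ascending`). If it fails at some `b ∉ J`, the
exchange property (`exchange`) trades a later box of `J` for `b`, giving a lexicographically smaller
reduced subword (`ascentAt_of_leftmost`). Conversely, at the first box `b` where a smaller reduced
subword differs from `J`, the letter `s_b` would be a left descent of `v_b` (`lex_of_ascentAt`).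

To compare this with bad `⌶`s, draw each box of `J` as a crossing of a horizontal and a vertical
pipe and every other box of the `k × (n - k + 1)` rectangle as an elbow joining its bottom edge to
its left edge and its right edge to its top edge. Labelling the pipes increasingly along the lower
right border, from bottom left to top right, the labels `V` of the bottom edge and `H` of the right
edge of `b` are the two entries of `v_b⁻¹` that `s_b` exchanges (`isPipeLabelling_entry`), so that
the condition on `b` reads `V < H`.

* If there is no bad `⌶`, follow the pipes of a box backwards, towards the border. The pipe leaving
  downwards can only reach a box from its left after an elbow further left in that row, and the pipe
  leaving to the right can only reach a box from its top after an elbow further up in that column.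
  So a box where they meet again cannot be a crossing, and `V < H` (`lt_of_no_bad`).
* If there is a bad `⌶`, take one of minimal size: a crossing `(r, c)` with elbows at `(r', c)` and
  `(r, c')`. By minimality the rest of the border of the rectangle between `(r', c')` and `(r, c)`,
  apart from `(r', c')`, consists of crossings, so the pipes crossing at `(r, c)` meet again at
  `(r', c')` in the opposite order, and `V < H` fails at one of the two boxes (`not_bad_of_lt`).
-/

/-- The adjacent transposition `s_i = (i, i+1)` (for `1 ≤ i ≤ n`) in the symmetric
group on `{1, …, n+1}`, realized as `Equiv.Perm (Fin (n+1))`; out-of-range indices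
give the identity. -/
def adjTransposition (n : ℕ) (i : ℕ) : Equiv.Perm (Fin (n + 1)) :=
  if h : 1 ≤ i ∧ i ≤ n then Equiv.swap ⟨i - 1, by omega⟩ ⟨i, by omega⟩ else 1

/-- The Coxeter length of a permutation: the minimal length of an expression as a
product of the adjacent transpositions `s_1, …, s_n`. -/
noncomputable def coxeterLength (n : ℕ) (w : Equiv.Perm (Fin (n + 1))) : ℕ :=
  sInf {m | ∃ l : List ℕ, (∀ i ∈ l, 1 ≤ i ∧ i ≤ n) ∧ l.length = m ∧
    (l.map (adjTransposition n)).prod = w}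

/-- A list of indices in `{1, …, n}` is a reduced word if its length equals the
Coxeter length of the permutation it represents. -/
def IsReducedWord (n : ℕ) (l : List ℕ) : Prop :=
  (∀ i ∈ l, 1 ≤ i ∧ i ≤ n) ∧
    coxeterLength n ((l.map (adjTransposition n)).prod) = l.length

/-- `b = (r, c)` is a box of the partition `λ` (with `k` parts, possibly zero):
`1 ≤ r ≤ k` and `1 ≤ c ≤ λ_r`. -/
def IsBoxOf (k : ℕ) (lam : ℕ → ℕ) (b : ℕ × ℕ) : Prop :=
  1 ≤ b.1 ∧ b.1 ≤ k ∧ 1 ≤ b.2 ∧ b.2 ≤ lam b.1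

/-- The word (list of generator indices) obtained by reading the boxes of `J` in
row-reading order (top to bottom, left to right, i.e. lexicographic order on `(r,c)`),
where the box `(r, c)` carries the letter `s_{k - r + c}`. -/
def rowReadingWord (k : ℕ) (J : Finset (ℕ ×ₗ ℕ)) : List ℕ :=
  (J.sort (· ≤ ·)).map fun b => k - (ofLex b).1 + (ofLex b).2

/-- `J` contains a bad `⌶`: a box `(r,c) ∈ J` together with a box `(r',c)` of `λ`
with `r' < r` not in `J` and a box `(r,c')` of `λ` with `c' < c` not in `J`. -/
def HasBadJot (k : ℕ) (lam : ℕ → ℕ) (J : Finset (ℕ ×ₗ ℕ)) : Prop :=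
  ∃ b ∈ J, ∃ r' c' : ℕ,
    r' < (ofLex b).1 ∧ IsBoxOf k lam (r', (ofLex b).2) ∧ toLex (r', (ofLex b).2) ∉ J ∧
    c' < (ofLex b).2 ∧ IsBoxOf k lam ((ofLex b).1, c') ∧ toLex ((ofLex b).1, c') ∉ J


/-! ### Pipe labellings of a rectangle -/

/-- `V r c` and `H r c` are the labels of the pipes through the bottom edge and the right edge of
the box `(r, c)` of the `k × m` rectangle (1-based, rows from top to bottom), where `X` is the set
of crossings and all other boxes are elbows joining bottom to left and right to top. The top edge of
`(r + 1, c)` is the bottom edge of `(r, c)`, and the left edge of `(r, c + 1)` is the right edge of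
`(r, c)`. Border labels start from `0` and increase from bottom left to top right. -/
structure IsPipeLabelling (k m : ℕ) (X : ℕ → ℕ → Prop) (V H : ℕ → ℕ → ℕ) : Prop where
  V_cross : ∀ r c, 1 ≤ r → r + 1 ≤ k → 1 ≤ c → c ≤ m → X (r + 1) c → V r c = V (r + 1) c
  V_elbow : ∀ r c, 1 ≤ r → r + 1 ≤ k → 1 ≤ c → c ≤ m → ¬ X (r + 1) c → V r c = H (r + 1) c
  H_cross : ∀ r c, 1 ≤ r → r ≤ k → 1 ≤ c → c + 1 ≤ m → X r (c + 1) → H r c = H r (c + 1)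
  H_elbow : ∀ r c, 1 ≤ r → r ≤ k → 1 ≤ c → c + 1 ≤ m → ¬ X r (c + 1) → H r c = V r (c + 1)
  V_bot : ∀ c, 1 ≤ c → c ≤ m → V k c = c - 1
  H_right : ∀ r, 1 ≤ r → r ≤ k → H r m = k - r + m

namespace IsPipeLabelling

variable {k m : ℕ} {X : ℕ → ℕ → Prop} {V H : ℕ → ℕ → ℕ}

theorem V_run (h : IsPipeLabelling k m X V H) {r r' c : ℕ} (hr : 1 ≤ r) (hrr : r ≤ r')
    (hr' : r' ≤ k) (hc : 1 ≤ c) (hc' : c ≤ m) (hX : ∀ x, r < x → x ≤ r' → X x c) :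
    V r c = V r' c := by
  induction r', hrr using Nat.le_induction with
  | base => rfl
  | succ y hy ih =>
    rw [ih (by omega) (fun x h1 h2 => hX x h1 (by omega))]
    exact h.V_cross y c (by omega) hr' hc hc' (hX _ (by omega) le_rfl)

theorem H_run (h : IsPipeLabelling k m X V H) {r c c' : ℕ} (hr : 1 ≤ r) (hrk : r ≤ k)
    (hc : 1 ≤ c) (hcc : c ≤ c') (hc' : c' ≤ m) (hX : ∀ y, c < y → y ≤ c' → X r y) :
    H r c = H r c' := by
  induction c', hcc using Nat.le_induction with
  | base => rfl
  | succ y hy ih =>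
    rw [ih (by omega) (fun x h1 h2 => hX x h1 (by omega))]
    exact h.H_cross r y hr hrk (by omega) hc' (hX _ (by omega) le_rfl)

/-- Following a pipe downwards from the bottom edge of `(r, c)`, either it leaves through the bottom
border, or there is a first elbow, where it turns to the right. -/
theorem V_trace (h : IsPipeLabelling k m X V H) {r c : ℕ} (hr : 1 ≤ r) (hrk : r ≤ k)
    (hc : 1 ≤ c) (hc' : c ≤ m) :
    ((∀ x, r < x → x ≤ k → X x c) ∧ V r c = c - 1) ∨
      ∃ r', r < r' ∧ r' ≤ k ∧ ¬ X r' c ∧ (∀ x, r < x → x < r' → X x c) ∧ V r c = H r' c := by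
  classical
  by_cases hX : ∀ x, r < x → x ≤ k → X x c
  · exact Or.inl ⟨hX, by rw [h.V_run hr hrk le_rfl hc hc' hX, h.V_bot c hc hc']⟩
  · right
    push Not at hX
    obtain ⟨h1, h2, h3⟩ := Nat.find_spec hX
    have hmin : ∀ x, r < x → x < Nat.find hX → X x c := fun x hx hlt => by
      by_contra hn
      exact Nat.find_min hX hlt ⟨hx, by omega, hn⟩
    refine ⟨Nat.find hX, h1, h2, h3, hmin, ?_⟩
    obtain ⟨y, hy⟩ : ∃ y, Nat.find hX = y + 1 := ⟨Nat.find hX - 1, by omega⟩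
    rw [hy] at h1 h2 h3 hmin ⊢
    rw [h.V_run hr (show r ≤ y by omega) (by omega) hc hc'
      (fun x hx hxy => hmin x hx (by omega)), h.V_elbow y c (by omega) h2 hc hc' h3]

/-- Following a pipe to the right from the right edge of `(r, c)`, either it leaves through the right
border, or there is a first elbow, where it turns downwards. -/
theorem H_trace (h : IsPipeLabelling k m X V H) {r c : ℕ} (hr : 1 ≤ r) (hrk : r ≤ k)
    (hc : 1 ≤ c) (hc' : c ≤ m) :
    ((∀ y, c < y → y ≤ m → X r y) ∧ H r c = k - r + m) ∨
      ∃ c', c < c' ∧ c' ≤ m ∧ ¬ X r c' ∧ (∀ y, c < y → y < c' → X r y) ∧ H r c = V r c' := by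
  classical
  by_cases hX : ∀ y, c < y → y ≤ m → X r y
  · exact Or.inl ⟨hX, by rw [h.H_run hr hrk hc hc' le_rfl hX, h.H_right r hr hrk]⟩
  · right
    push Not at hX
    obtain ⟨h1, h2, h3⟩ := Nat.find_spec hX
    have hmin : ∀ y, c < y → y < Nat.find hX → X r y := fun x hx hlt => by
      by_contra hn
      exact Nat.find_min hX hlt ⟨hx, by omega, hn⟩
    refine ⟨Nat.find hX, h1, h2, h3, hmin, ?_⟩
    obtain ⟨y, hy⟩ : ∃ y, Nat.find hX = y + 1 := ⟨Nat.find hX - 1, by omega⟩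
    rw [hy] at h1 h2 h3 hmin ⊢
    rw [h.H_run hr hrk hc (show c ≤ y by omega) (by omega)
      (fun x hx hxy => hmin x hx (by omega)), h.H_elbow r y hr hrk (by omega) h2 h3]

/-- The pipe leaving `(r, c)` only moves down and to the right, so it reaches the border in a column
`≥ c` or in a row `≥ r`. -/
theorem bounds (h : IsPipeLabelling k m X V H) (N : ℕ) : ∀ r c, k - r + (m - c) = N →
    1 ≤ r → r ≤ k → 1 ≤ c → c ≤ m →
      c ≤ V r c + 1 ∧ V r c + 1 ≤ k - r + m ∧ c ≤ H r c ∧ H r c ≤ k - r + m := by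
  induction N with
  | zero =>
    intro r c hN hr hrk hc hcm
    obtain rfl : r = k := by omega
    obtain rfl : c = m := by omega
    rw [h.V_bot c hc hcm, h.H_right r hr hrk]
    omega
  | succ N ih =>
    intro r c hN hr hrk hc hcm
    have hV : c ≤ V r c + 1 ∧ V r c + 1 ≤ k - r + m := by
      rcases hrk.eq_or_lt with rfl | hlt
      · rw [h.V_bot c hc hcm]; omega
      · have := ih (r + 1) c (by omega) (by omega) hlt hc hcm
        by_cases hX : X (r + 1) c
        · rw [h.V_cross r c hr hlt hc hcm hX]; omega
        · rw [h.V_elbow r c hr hlt hc hcm hX]; omega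
    have hH : c ≤ H r c ∧ H r c ≤ k - r + m := by
      rcases hcm.eq_or_lt with rfl | hlt
      · rw [h.H_right r hr hrk]; omega
      · have := ih r (c + 1) (by omega) hr hrk (by omega) hlt
        by_cases hX : X r (c + 1)
        · rw [h.H_cross r c hr hrk hc hlt hX]; omega
        · rw [h.H_elbow r c hr hrk hc hlt hX]; omega
    exact ⟨hV.1, hV.2, hH.1, hH.2⟩

/-- Without a bad configuration, the label below a box is smaller than the label to the right of any
box weakly above it and weakly to its right. This generality makes the induction on `k - r` work:
after one elbow each, the two pipes are again in such a position. -/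
theorem lt_of_no_bad (h : IsPipeLabelling k m X V H)
    (hX : ∀ r c r' c', 1 ≤ r' → r' < r → r ≤ k → 1 ≤ c' → c' < c → c ≤ m →
      X r c → X r' c ∨ X r c') (N : ℕ) :
    ∀ r c s d, k - r ≤ N → 1 ≤ s → s ≤ r → r ≤ k → 1 ≤ c → c ≤ d → d ≤ m →
      V r c < H s d := by
  induction N with
  | zero =>
    intro r c s d hN hs hsr hrk hc hcd hdm
    obtain rfl : r = k := by omega
    have := h.bounds _ s d rfl hs hsr (by omega) hdm
    rw [h.V_bot c hc (by omega)]
    omega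
  | succ N ih =>
    intro r c s d hN hs hsr hrk hc hcd hdm
    have hb := h.bounds _ r c rfl (by omega) hrk hc (by omega)
    have hb' := h.bounds _ s d rfl hs (by omega) (by omega) hdm
    rcases h.V_trace (r := r) (c := c) (by omega) hrk hc (by omega) with
      ⟨-, hV⟩ | ⟨r₁, hr₁, hr₁k, hX₁, -, hV⟩
    · omega
    rcases h.H_trace (r := s) (c := d) hs (by omega) (by omega) hdm with
      ⟨-, hH⟩ | ⟨d₁, hd₁, hd₁m, hX₂, -, hH⟩
    · omega
    -- A crossing at `(r₁, d₁)` would have the elbow `(s, d₁)` above it and `(r₁, c)` to its left.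
    have hX₃ : ¬ X r₁ d₁ := fun hx => by
      rcases hX r₁ d₁ s c hs (by omega) hr₁k hc (by omega) hd₁m hx with h' | h'
      · exact hX₂ h'
      · exact hX₁ h'
    rcases h.H_trace (r := r₁) (c := c) (by omega) hr₁k hc (by omega) with
      ⟨hall, -⟩ | ⟨c₂, hc₂, hc₂m, -, hall, hA⟩
    · exact absurd (hall d₁ (by omega) hd₁m) hX₃
    rcases h.V_trace (r := s) (c := d₁) hs (by omega) (by omega) hd₁m with
      ⟨hall', -⟩ | ⟨r₂, hr₂, hr₂k, -, hall', hB⟩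
    · exact absurd (hall' r₁ (by omega) hr₁k) hX₃
    have hcd₂ : c₂ ≤ d₁ := by
      by_contra hlt
      exact hX₃ (hall d₁ (by omega) (by omega))
    have hrr₂ : r₂ ≤ r₁ := by
      by_contra hlt
      exact hX₃ (hall' r₁ (by omega) (by omega))
    rw [hV, hH, hA, hB]
    exact ih r₁ c₂ r₂ d₁ (by omega) (by omega) hrr₂ hr₁k (by omega) hcd₂ hd₁m

/-- A bad configuration forces `V < H` to fail at some box weakly above and to the left of its
crossing. The induction on `N` amounts to choosing a bad configuration of minimal size. -/
theorem not_bad_of_lt (h : IsPipeLabelling k m X V H) (N : ℕ) :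
    ∀ r c r' c', (r - r') + (c - c') = N → 1 ≤ r' → r' < r → r ≤ k → 1 ≤ c' → c' < c → c ≤ m →
      (∀ x y, 1 ≤ x → x ≤ r → 1 ≤ y → y ≤ c → V x y < H x y) →
      X r c → ¬ X r' c → ¬ X r c' → False := by
  induction N using Nat.strong_induction_on with
  | _ N ih =>
    intro r c r' c' hN hr' hrr hrk hc' hcc hcm hlt hX hXu hXl
    have h1 : ∀ y, c' < y → y < c → X r y := fun y hy hyc => by
      by_contra hn
      exact ih _ (by omega) r c r' y rfl hr' hrr hrk (by omega) hyc hcm hlt hX hXu hn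
    have h2 : ∀ y, c' < y → y < c → X r' y := fun y hy hyc => by
      by_contra hn
      exact ih _ (by omega) r y r' c' rfl hr' hrr hrk hc' hy (by omega)
        (fun x z hx hxr hz hzy => hlt x z hx hxr hz (by omega)) (h1 y hy hyc) hn hXl
    have h3 : ∀ x, r' < x → x < r → X x c := fun x hx hxr => by
      by_contra hn
      exact ih _ (by omega) r c x c' rfl (by omega) hxr hrk hc' hcc hcm hlt hX hn hXl
    have h4 : ∀ x, r' < x → x < r → X x c' := fun x hx hxr => by
      by_contra hn
      exact ih _ (by omega) x c r' c' rfl hr' hx (by omega) hc' hcc hcm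
        (fun z y hz hzx hy hyc => hlt z y hz (by omega) hy hyc) (h3 x hx hxr) hXu hn
    obtain ⟨p, rfl⟩ : ∃ p, r = p + 1 := ⟨r - 1, by omega⟩
    obtain ⟨q, rfl⟩ : ∃ q, c = q + 1 := ⟨c - 1, by omega⟩
    -- The two pipes crossing at `(p + 1, q + 1)` are the ones meeting at `(r', c')`, interchanged.
    have e1 : V r' c' = H (p + 1) (q + 1) := by
      rw [h.V_run hr' (show r' ≤ p by omega) (by omega) hc' (by omega)
        (fun x hx hxp => h4 x hx (by omega)), h.V_elbow p c' (by omega) hrk hc' (by omega) hXl]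
      refine h.H_run (by omega) hrk hc' (by omega) hcm fun y hy hyq => ?_
      rcases hyq.eq_or_lt with rfl | hlt'
      · exact hX
      · exact h1 y hy hlt'
    have e2 : H r' c' = V (p + 1) (q + 1) := by
      rw [h.H_run hr' (by omega) hc' (show c' ≤ q by omega) (by omega)
        (fun y hy hyq => h2 y hy (by omega)), h.H_elbow r' q hr' (by omega) (by omega) hcm hXu]
      refine h.V_run hr' (by omega) hrk (by omega) hcm fun x hx hxp => ?_
      rcases hxp.eq_or_lt with rfl | hlt'
      · exact hX
      · exact h3 x hx hlt'
    have a := hlt r' c' hr' (by omega) hc' (by omega)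
    have b := hlt (p + 1) (q + 1) (by omega) le_rfl (by omega) le_rfl
    omega

end IsPipeLabelling

/-! ### Reduced words and the exchange property -/

section

open Equiv

/-- The product of the adjacent transpositions in a word, as a permutation of `ℕ` in which the letter
`a` exchanges `a - 1` and `a`. Working in `ℕ` avoids bounds on positions; for words in `1, …, n` it
is the extension by the identity of the product in `Equiv.Perm (Fin (n + 1))`. -/
def natProd (l : List ℕ) : Perm ℕ := (l.map fun a => swap (a - 1) a).prod

@[simp] theorem natProd_nil : natProd [] = 1 := rfl

@[simp] theorem natProd_cons (a : ℕ) (l : List ℕ) :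
    natProd (a :: l) = swap (a - 1) a * natProd l := by simp [natProd]

theorem natProd_append (l l' : List ℕ) : natProd (l ++ l') = natProd l * natProd l' := by
  simp [natProd]

theorem natProd_cons_inv_apply (a : ℕ) (l : List ℕ) (i : ℕ) :
    (natProd (a :: l))⁻¹ i = (natProd l)⁻¹ (swap (a - 1) a i) := by
  simp [mul_inv_rev]

theorem extendDomain_adjTransposition (n a : ℕ) (h : 1 ≤ a ∧ a ≤ n) :
    (adjTransposition n a).extendDomain Fin.equivSubtype = swap (a - 1) a := by
  rw [adjTransposition, dif_pos h]
  ext x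
  by_cases hx : x < n + 1
  · rw [Perm.extendDomain_apply_subtype (p := fun i => i < n + 1) _ _ (b := x) hx]
    simp only [Fin.equivSubtype, Equiv.coe_fn_symm_mk, Equiv.coe_fn_mk, swap_apply_def,
      Fin.ext_iff]
    split_ifs <;> rfl
  · rw [Perm.extendDomain_apply_not_subtype (p := fun i => i < n + 1) _ _ (b := x) hx,
      swap_apply_of_ne_of_ne] <;> omega

theorem natProd_eq_extendDomain (n : ℕ) (l : List ℕ) (hl : ∀ i ∈ l, 1 ≤ i ∧ i ≤ n) :
    natProd l = ((l.map (adjTransposition n)).prod).extendDomain Fin.equivSubtype := by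
  induction l with
  | nil => simp
  | cons a l ih =>
    rw [natProd_cons, ih fun i hi => hl i (List.mem_cons_of_mem _ hi), List.map_cons,
      List.prod_cons, ← Perm.extendDomain_mul,
      extendDomain_adjTransposition n a (hl a List.mem_cons_self)]

theorem natProd_eq_iff (n : ℕ) (l l' : List ℕ) (hl : ∀ i ∈ l, 1 ≤ i ∧ i ≤ n)
    (hl' : ∀ i ∈ l', 1 ≤ i ∧ i ≤ n) :
    natProd l = natProd l' ↔
      (l.map (adjTransposition n)).prod = (l'.map (adjTransposition n)).prod := by
  rw [natProd_eq_extendDomain n l hl, natProd_eq_extendDomain n l' hl']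
  exact (Perm.extendDomainHom_injective (Fin.equivSubtype (n := n + 1))).eq_iff

/-- A word is reduced if and only if no shorter word has the same product. -/
theorem isReducedWord_iff (n : ℕ) (l : List ℕ) :
    IsReducedWord n l ↔ (∀ i ∈ l, 1 ≤ i ∧ i ≤ n) ∧
      ∀ l' : List ℕ, (∀ i ∈ l', 1 ≤ i ∧ i ≤ n) → natProd l' = natProd l →
        l.length ≤ l'.length := by
  unfold IsReducedWord
  refine and_congr_right fun hl => ?_
  have hmem : l.length ∈ {m | ∃ l' : List ℕ, (∀ i ∈ l', 1 ≤ i ∧ i ≤ n) ∧ l'.length = m ∧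
      (l'.map (adjTransposition n)).prod = (l.map (adjTransposition n)).prod} :=
    ⟨l, hl, rfl, rfl⟩
  constructor
  · intro h l' hl' heq
    rw [← h]
    exact Nat.sInf_le ⟨l', hl', rfl, (natProd_eq_iff n l' l hl' hl).1 heq⟩
  · intro h
    refine le_antisymm (Nat.sInf_le hmem) ?_
    obtain ⟨l', hl', hlen, heq⟩ := Nat.sInf_mem ⟨_, hmem⟩
    rw [coxeterLength, ← hlen]
    exact h l' hl' ((natProd_eq_iff n l' l hl' hl).2 heq)

/-- The exchange property for an arbitrary transposition `(p q)`: if it is a left inversion of the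
product, multiplying by it on the left amounts to deleting a letter. The general transposition is
needed because moving `(p q)` past the first letter conjugates it. -/
theorem exchange (l : List ℕ) : ∀ p q : ℕ, p < q → (natProd l)⁻¹ q < (natProd l)⁻¹ p →
    ∃ i < l.length, swap p q * natProd l = natProd (l.eraseIdx i) := by
  induction l with
  | nil => intro p q hpq h; simp at h; omega
  | cons b l ih =>
    intro p q hpq h
    rw [natProd_cons_inv_apply, natProd_cons_inv_apply] at h
    by_cases hlt : swap (b - 1) b p < swap (b - 1) b q
    · -- `(p q) s_b = s_b (s_b p  s_b q)`, so the letter is deleted further on.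
      obtain ⟨i, hi, hEq⟩ := ih _ _ hlt h
      refine ⟨i + 1, by simpa using hi, ?_⟩
      rw [List.eraseIdx_cons_succ, natProd_cons, natProd_cons, ← hEq, ← mul_assoc, ← mul_assoc,
        swap_apply_apply, mul_assoc (swap (b-1) b), swap_inv]
      simp [← mul_assoc]
    · -- Only `s_b` itself has its two points put out of order by `s_b`, so `b` is deleted.
      have hpb : p = b - 1 ∧ q = b := by
        simp only [swap_apply_def] at hlt
        split_ifs at hlt <;> omega
      refine ⟨0, by simp, ?_⟩
      rw [hpb.1, hpb.2, natProd_cons, ← mul_assoc, swap_mul_self, one_mul]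
      rfl

/-- Building the product of the word from right to left, no letter is a left descent of the product
of the letters after it. -/
def Ascending : List ℕ → Prop
  | [] => True
  | a :: l => (natProd l)⁻¹ (a - 1) < (natProd l)⁻¹ a ∧ Ascending l

theorem descent_of_not_ascent {a : ℕ} (ha : 1 ≤ a) {w : Perm ℕ} (h : ¬ w (a - 1) < w a) :
    w a < w (a - 1) :=
  lt_of_le_of_ne (not_lt.1 h) fun he => by have := w.injective he; omega

theorem Ascending.length_le {l : List ℕ} (hl : Ascending l) : ∀ l' : List ℕ,
    (∀ a ∈ l, 1 ≤ a) → natProd l' = natProd l → l.length ≤ l'.length := by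
  induction l with
  | nil => simp
  | cons a l ih =>
    intro l' hpos heq
    have ha : 1 ≤ a := hpos a List.mem_cons_self
    have hd : (natProd l')⁻¹ a < (natProd l')⁻¹ (a - 1) := by
      rw [heq, natProd_cons_inv_apply, natProd_cons_inv_apply, swap_apply_left, swap_apply_right]
      exact hl.1
    obtain ⟨i, hi, hex⟩ := exchange l' (a - 1) a (by omega) hd
    rw [heq, natProd_cons, ← mul_assoc, swap_mul_self, one_mul] at hex
    have := ih hl.2 _ (fun b hb => hpos b (List.mem_cons_of_mem _ hb)) hex.symm
    rw [List.length_eraseIdx_of_lt hi] at this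
    simp only [List.length_cons]
    omega

theorem ascending_of_minimal (n : ℕ) (l : List ℕ) (hl : ∀ i ∈ l, 1 ≤ i ∧ i ≤ n)
    (hmin : ∀ l' : List ℕ, (∀ i ∈ l', 1 ≤ i ∧ i ≤ n) → natProd l' = natProd l →
        l.length ≤ l'.length) : Ascending l := by
  induction l with
  | nil => trivial
  | cons a l ih =>
    have hl₁ : ∀ i ∈ l, 1 ≤ i ∧ i ≤ n := fun i hi => hl i (List.mem_cons_of_mem _ hi)
    have ha := hl a List.mem_cons_self
    refine ⟨?_, ih hl₁ fun l' hl' heq => ?_⟩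
    · by_contra hn
      obtain ⟨i, hi, hex⟩ := exchange l (a - 1) a (by omega) (descent_of_not_ascent ha.1 hn)
      have := hmin (l.eraseIdx i) (fun j hj => hl₁ j (List.mem_of_mem_eraseIdx hj))
        (by rw [natProd_cons, hex])
      rw [List.length_eraseIdx_of_lt hi, List.length_cons] at this
      omega
    · have := hmin (a :: l') (by
        intro i hi
        rcases List.mem_cons.1 hi with rfl | hi
        · exact ha
        · exact hl' i hi) (by rw [natProd_cons, natProd_cons, heq])
      simpa using this

theorem isReducedWord_iff_ascending (n : ℕ) (l : List ℕ) :
    IsReducedWord n l ↔ (∀ i ∈ l, 1 ≤ i ∧ i ≤ n) ∧ Ascending l := by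
  rw [isReducedWord_iff]
  refine and_congr_right fun hl => ⟨ascending_of_minimal n l hl, fun h l' _ heq => ?_⟩
  exact h.length_le l' (fun a ha => (hl a ha).1) heq

/-! ### Leftmost subwords and ascents -/

/-- The letter `k - r + c` carried by the box `b = (r, c)`. -/
abbrev letter (k : ℕ) (b : ℕ ×ₗ ℕ) : ℕ := k - (ofLex b).1 + (ofLex b).2

theorem rowReadingWord_insert (k : ℕ) (b : ℕ ×ₗ ℕ) (S : Finset (ℕ ×ₗ ℕ))
    (h : ∀ x ∈ S, b < x) :
    rowReadingWord k (insert b S) = letter k b :: rowReadingWord k S := by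
  unfold rowReadingWord
  rw [Finset.sort_insert (· ≤ ·) (fun x hx => (h x hx).le) (fun hb => lt_irrefl _ (h b hb)),
    List.map_cons]

/-- The boxes of `S` strictly after `b` in reading order. -/
def after (S : Finset (ℕ ×ₗ ℕ)) (b : ℕ ×ₗ ℕ) : Finset (ℕ ×ₗ ℕ) := S.filter (b < ·)

/-- The `i`-th entry, with positions counted from `0`, of the inverse of the product of the row
reading word of `S`. -/
def entry (k : ℕ) (S : Finset (ℕ ×ₗ ℕ)) (i : ℕ) : ℕ := (natProd (rowReadingWord k S))⁻¹ i

/-- The letter of `b` is not a left descent of the product of the letters of the boxes of `S` after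
`b`. The box `b` itself need not belong to `S`. -/
def AscentAt (k : ℕ) (S : Finset (ℕ ×ₗ ℕ)) (b : ℕ ×ₗ ℕ) : Prop :=
  entry k (after S b) (letter k b - 1) < entry k (after S b) (letter k b)

theorem ascending_iff (k : ℕ) (S : Finset (ℕ ×ₗ ℕ)) :
    Ascending (rowReadingWord k S) ↔ ∀ b ∈ S, AscentAt k S b := by
  induction S using Finset.induction_on_min with
  | empty => simp [rowReadingWord, Ascending]
  | insert x S hx ih =>
    have h1 : after (insert x S) x = S := by
      ext y
      simp only [after, Finset.mem_filter, Finset.mem_insert]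
      exact ⟨fun ⟨h, h'⟩ => h.resolve_left h'.ne', fun h => ⟨Or.inr h, hx y h⟩⟩
    have h2 : ∀ b ∈ S, after (insert x S) b = after S b := fun b hb => by
      simp only [after, Finset.filter_insert, if_neg (hx b hb).not_gt]
    rw [rowReadingWord_insert k x S hx, Ascending, ih, Finset.forall_mem_insert]
    unfold AscentAt
    rw [h1]
    refine and_congr Iff.rfl (forall₂_congr fun b hb => ?_)
    rw [h2 b hb]

/-- Of two lists of the same length, the second is equal to the first, greater, or smaller; in the
last case the position of the first difference is made explicit. -/
theorem lex_trichotomy {α : Type*} [LinearOrder α] : ∀ X Y : List α, X.length = Y.length →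
    X = Y ∨ List.Lex (· < ·) X Y ∨
      ∃ C b d X' Y', X = C ++ d :: X' ∧ Y = C ++ b :: Y' ∧ b < d
  | [], [], _ => Or.inl rfl
  | x :: X, y :: Y, h => by
    rcases lt_trichotomy x y with hlt | rfl | hlt
    · exact Or.inr (Or.inl (List.Lex.rel hlt))
    · rcases lex_trichotomy X Y (by simpa using h) with rfl | h' | ⟨C, b, d, X', Y', rfl, rfl, hbd⟩
      · exact Or.inl rfl
      · exact Or.inr (Or.inl (List.Lex.cons h'))
      · exact Or.inr (Or.inr ⟨x :: C, b, d, X', Y', rfl, rfl, hbd⟩)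
    · exact Or.inr (Or.inr ⟨[], y, x, X, Y, rfl, rfl, hlt⟩)

theorem sort_filter (S : Finset (ℕ ×ₗ ℕ)) (p : ℕ ×ₗ ℕ → Prop) [DecidablePred p] :
    (S.filter p).sort (· ≤ ·) = (S.sort (· ≤ ·)).filter p := by
  have h : ((S.sort (· ≤ ·)).filter p).toFinset = S.filter p := by ext; simp
  rw [← h]
  exact (List.toFinset_sort (· ≤ ·) ((S.sort_nodup (· ≤ ·)).filter _)).2
    ((S.pairwise_sort (· ≤ ·)).filter _)

theorem sort_after_of_append {S : Finset (ℕ ×ₗ ℕ)} {b : ℕ ×ₗ ℕ} {C Y : List (ℕ ×ₗ ℕ)}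
    (h : S.sort (· ≤ ·) = C ++ Y) (hC : ∀ x ∈ C, x ≤ b) (hY : ∀ x ∈ Y, b < x) :
    (after S b).sort (· ≤ ·) = Y := by
  rw [after, sort_filter, h, List.filter_append, List.filter_eq_nil_iff.2, List.nil_append,
    List.filter_eq_self.2]
  · simpa using hY
  · simpa using hC

theorem sort_split (S : Finset (ℕ ×ₗ ℕ)) (b : ℕ ×ₗ ℕ) :
    S.sort (· ≤ ·) = (S.filter (· ≤ b)).sort (· ≤ ·) ++ (after S b).sort (· ≤ ·) := by
  have hset : ((S.filter (· ≤ b)).sort (· ≤ ·) ++ (after S b).sort (· ≤ ·)).toFinset = S := by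
    ext x
    simp only [List.mem_toFinset, List.mem_append, Finset.mem_sort, after, Finset.mem_filter]
    have := le_or_gt x b
    tauto
  have hlt : ((S.filter (· ≤ b)).sort (· ≤ ·) ++ (after S b).sort (· ≤ ·)).Pairwise (· < ·) := by
    rw [List.pairwise_append]
    refine ⟨(Finset.sortedLT_sort _).pairwise, (Finset.sortedLT_sort _).pairwise, ?_⟩
    intro x hx y hy
    simp only [Finset.mem_sort, after, Finset.mem_filter] at hx hy
    exact hx.2.trans_lt hy.2
  have h := (List.toFinset_sort (· ≤ ·) (hlt.imp fun h => h.ne)).2 (hlt.imp fun h => h.le)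
  rwa [hset] at h

/-- If the ascent condition holds on `J ∪ J'`, then `J` comes no later than `J'`: at a first
difference `b ∈ J'` preceding the next box of `J`, the letter of `b` would be a left descent of the
common remaining product. -/
theorem lex_of_ascentAt (n k : ℕ) (J J' : Finset (ℕ ×ₗ ℕ))
    (hv : ∀ i ∈ rowReadingWord k J, 1 ≤ i ∧ i ≤ n)
    (hJ : ∀ b ∈ J ∪ J', AscentAt k J b)
    (hJ' : IsReducedWord n (rowReadingWord k J'))
    (heq : ((rowReadingWord k J').map (adjTransposition n)).prod =
          ((rowReadingWord k J).map (adjTransposition n)).prod) :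
    J = J' ∨ List.Lex (· < ·) (J.sort (· ≤ ·)) (J'.sort (· ≤ ·)) := by
  have hred : IsReducedWord n (rowReadingWord k J) :=
    (isReducedWord_iff_ascending n _).2 ⟨hv, (ascending_iff k J).2
      fun b hb => hJ b (Finset.mem_union_left _ hb)⟩
  have hlen : (J.sort (· ≤ ·)).length = (J'.sort (· ≤ ·)).length := by
    have h1 := hred.2
    have h2 := hJ'.2
    rw [heq, h1] at h2
    simpa [rowReadingWord] using h2
  have hnat := (natProd_eq_iff n _ _ hJ'.1 hv).2 heq
  rcases lex_trichotomy _ _ hlen with h | h | ⟨C, b, d, Y, Y', hX, hX', hbd⟩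
  · left
    rw [← J.sort_toFinset (· ≤ ·), h, J'.sort_toFinset]
  · exact Or.inr h
  · exfalso
    have hs : (C ++ d :: Y).Pairwise (· < ·) := by
      rw [← hX]; exact (J.sortedLT_sort).pairwise
    have hs' : (C ++ b :: Y').Pairwise (· < ·) := by
      rw [← hX']; exact (J'.sortedLT_sort).pairwise
    rw [List.pairwise_append, List.pairwise_cons] at hs hs'
    have ha : (after J b).sort (· ≤ ·) = d :: Y := by
      refine sort_after_of_append hX (fun x hx => (hs'.2.2 x hx b List.mem_cons_self).le)
        fun x hx => ?_
      rcases List.mem_cons.1 hx with rfl | hx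
      · exact hbd
      · exact hbd.trans (hs.2.1.1 x hx)
    have ha' : (after J' b).sort (· ≤ ·) = Y' := by
      refine sort_after_of_append (C := C ++ [b]) (by rw [hX']; simp) (fun x hx => ?_) hs'.2.1.1
      rcases List.mem_append.1 hx with hx | hx
      · exact (hs'.2.2 x hx b List.mem_cons_self).le
      · simp at hx; exact hx.le
    have hb : b ∈ J' := by rw [← J'.mem_sort (· ≤ ·), hX']; simp
    have hasc := hJ b (Finset.mem_union_right _ hb)
    have hasc' := (ascending_iff k J').1 ((isReducedWord_iff_ascending n _).1 hJ').2 b hb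
    unfold AscentAt entry rowReadingWord at hasc hasc'
    rw [ha] at hasc
    rw [ha'] at hasc'
    unfold rowReadingWord at hnat
    rw [hX, hX', List.map_append, List.map_append, natProd_append, natProd_append,
      mul_right_inj, List.map_cons (a := b)] at hnat
    rw [← hnat, natProd_cons_inv_apply, natProd_cons_inv_apply, swap_apply_left,
      swap_apply_right] at hasc
    exact lt_asymm hasc hasc'

/-- If `J` is leftmost, the ascent condition holds at any further box `b`, since otherwise the
exchange property replaces a box of `J` after `b` by `b`, without changing the product or the
length. -/
theorem ascentAt_of_leftmost (n k : ℕ) (J : Finset (ℕ ×ₗ ℕ)) (b : ℕ ×ₗ ℕ)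
    (hb : 1 ≤ letter k b ∧ letter k b ≤ n)
    (hred : IsReducedWord n (rowReadingWord k J))
    (hleft : ∀ J' : Finset (ℕ ×ₗ ℕ), J' ⊆ insert b J →
        IsReducedWord n (rowReadingWord k J') →
        ((rowReadingWord k J').map (adjTransposition n)).prod =
          ((rowReadingWord k J).map (adjTransposition n)).prod →
        (J = J' ∨ List.Lex (· < ·) (J.sort (· ≤ ·)) (J'.sort (· ≤ ·)))) :
    AscentAt k J b := by
  by_cases hbJ : b ∈ J
  · exact (ascending_iff k J).1 ((isReducedWord_iff_ascending n _).1 hred).2 b hbJ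
  by_contra hn
  obtain ⟨i, hi, hex⟩ := exchange _ (letter k b - 1) (letter k b) (by omega)
    (descent_of_not_ascent hb.1 hn)
  set C := (J.filter (· ≤ b)).sort (· ≤ ·) with hC
  set Y := (after J b).sort (· ≤ ·) with hY
  have hJs : J.sort (· ≤ ·) = C ++ Y := sort_split J b
  have hiY : i < Y.length := by
    simpa only [rowReadingWord, List.length_map] using hi
  have hCb : ∀ x ∈ C, x < b := fun x hx => by
    simp only [hC, Finset.mem_sort, Finset.mem_filter] at hx
    exact lt_of_le_of_ne hx.2 fun h => hbJ (h ▸ hx.1)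
  have hYb : ∀ x ∈ Y, b < x := fun x hx => by
    simp only [hY, after, Finset.mem_sort, Finset.mem_filter] at hx
    exact hx.2
  have hs : (C ++ Y).Pairwise (· < ·) := by
    rw [← hJs]; exact (J.sortedLT_sort).pairwise
  rw [List.pairwise_append] at hs
  set L := C ++ b :: Y.eraseIdx i with hL
  have hLs : L.Pairwise (· < ·) := by
    rw [hL, List.pairwise_append, List.pairwise_cons]
    refine ⟨hs.1, ⟨fun x hx => hYb x (List.mem_of_mem_eraseIdx hx),
      hs.2.1.sublist (List.eraseIdx_sublist _ _)⟩, fun x hx y hy => ?_⟩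
    rcases List.mem_cons.1 hy with rfl | hy
    · exact hCb x hx
    · exact (hCb x hx).trans (hYb y (List.mem_of_mem_eraseIdx hy))
  have hsort : L.toFinset.sort (· ≤ ·) = L :=
    (List.toFinset_sort (· ≤ ·) (hLs.imp fun h => h.ne)).2 (hLs.imp fun h => h.le)
  have hword : rowReadingWord k L.toFinset =
      C.map (letter k) ++ letter k b :: (Y.map (letter k)).eraseIdx i := by
    unfold rowReadingWord
    rw [hsort, hL, List.map_append, List.map_cons, List.eraseIdx_map]
  have hwordJ : rowReadingWord k J = C.map (letter k) ++ Y.map (letter k) := by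
    unfold rowReadingWord
    rw [hJs, List.map_append]
  have hprod : natProd (rowReadingWord k L.toFinset) = natProd (rowReadingWord k J) := by
    rw [hword, hwordJ, natProd_append, natProd_append, natProd_cons]
    change _ = natProd ((Y.map (letter k)).eraseIdx i) at hex
    rw [← hex, ← mul_assoc (swap _ _), swap_mul_self, one_mul]
    rfl
  have hv : ∀ j ∈ rowReadingWord k L.toFinset, 1 ≤ j ∧ j ≤ n := by
    intro j hj
    rw [hword, List.mem_append, List.mem_cons] at hj
    have hv := hred.1
    rw [hwordJ] at hv
    rcases hj with hj | rfl | hj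
    · exact hv j (List.mem_append_left _ hj)
    · exact hb
    · exact hv j (List.mem_append_right _ (List.mem_of_mem_eraseIdx hj))
  have hlen : (rowReadingWord k L.toFinset).length = (rowReadingWord k J).length := by
    rw [hword, hwordJ, List.length_append, List.length_append, List.length_cons,
      List.length_eraseIdx_of_lt (by simpa using hiY)]
    simp only [List.length_map]
    omega
  have hprod' := (natProd_eq_iff n _ _ hv hred.1).1 hprod
  have hbL : b ∈ L.toFinset := by simp [hL]
  have hLJ : L.toFinset ⊆ insert b J := fun x hx => by
    have hsub : x = b ∨ x ∈ C ∨ x ∈ Y.eraseIdx i := by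
      simpa [hL] using hx
    rw [Finset.mem_insert, ← J.mem_sort (· ≤ ·), hJs, List.mem_append]
    rcases hsub with h | h | h
    · exact Or.inl h
    · exact Or.inr (Or.inl h)
    · exact Or.inr (Or.inr (List.mem_of_mem_eraseIdx h))
  rcases hleft L.toFinset hLJ ⟨hv, by rw [hprod', hlen]; exact hred.2⟩ hprod'
    with h | h
  · exact hbJ (h ▸ hbL)
  · rw [hsort, hJs] at h
    obtain ⟨y, Y', hYe⟩ : ∃ y Y', Y = y :: Y' := by
      cases hYc : Y with
      | nil => rw [hYc] at hiY; simp at hiY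
      | cons y Y' => exact ⟨y, Y', rfl⟩
    have hlt : List.Lex (· < ·) L (C ++ Y) := by
      rw [hL]
      refine List.Lex.append_left _ ?_ C
      rw [hYe]
      exact List.Lex.rel (hYb y (by rw [hYe]; simp))
    exact Std.Asymm.asymm (r := List.Lex (· < ·)) _ _ h hlt

/-! ### The pipe labelling of a subword -/

theorem entry_insert (k : ℕ) (b : ℕ ×ₗ ℕ) (S : Finset (ℕ ×ₗ ℕ)) (h : ∀ x ∈ S, b < x) (i : ℕ) :
    entry k (insert b S) i = entry k S (swap (letter k b - 1) (letter k b) i) := by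
  rw [entry, rowReadingWord_insert k b S h, natProd_cons_inv_apply, entry]

theorem entry_eq_filter (k : ℕ) (S : Finset (ℕ ×ₗ ℕ)) (i : ℕ) (b : ℕ ×ₗ ℕ)
    (h : ∀ x ∈ S, x < b → i ≠ letter k x - 1 ∧ i ≠ letter k x) :
    entry k S i = entry k (S.filter (b ≤ ·)) i := by
  induction S using Finset.induction_on_min with
  | empty => rfl
  | insert x S hx ih =>
    by_cases hxb : x < b
    · obtain ⟨h1, h2⟩ := h x (Finset.mem_insert_self _ _) hxb
      rw [entry_insert k x S hx, swap_apply_of_ne_of_ne h1 h2, Finset.filter_insert,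
        if_neg hxb.not_ge]
      exact ih fun y hy => h y (Finset.mem_insert_of_mem hy)
    · rw [Finset.filter_true_of_mem]
      intro y hy
      rcases Finset.mem_insert.1 hy with rfl | hy
      · exact not_lt.1 hxb
      · exact (not_lt.1 hxb).trans (hx y hy).le

theorem entry_eq_self (k : ℕ) (S : Finset (ℕ ×ₗ ℕ)) (i : ℕ)
    (h : ∀ x ∈ S, i ≠ letter k x - 1 ∧ i ≠ letter k x) : entry k S i = i := by
  induction S using Finset.induction_on_min with
  | empty => simp [entry, rowReadingWord]
  | insert x S hx ih =>
    obtain ⟨h1, h2⟩ := h x (Finset.mem_insert_self _ _)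
    rw [entry_insert k x S hx, swap_apply_of_ne_of_ne h1 h2]
    exact ih fun y hy => h y (Finset.mem_insert_of_mem hy)

/-- Passing from the boxes after `a` to the boxes after a later box `b`, when no box strictly between
moves position `i`: only `b` itself matters. -/
theorem entry_after (k : ℕ) (J : Finset (ℕ ×ₗ ℕ)) (i : ℕ) {a b : ℕ ×ₗ ℕ} (hab : a < b)
    (h : ∀ x ∈ J, a < x → x < b → i ≠ letter k x - 1 ∧ i ≠ letter k x) :
    entry k (after J a) i = if b ∈ J
      then entry k (after J b) (swap (letter k b - 1) (letter k b) i)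
      else entry k (after J b) i := by
  rw [entry_eq_filter k (after J a) i b fun x hx hxb =>
    h x (Finset.mem_filter.1 hx).1 (Finset.mem_filter.1 hx).2 hxb]
  split_ifs with hb
  · have : (after J a).filter (b ≤ ·) = insert b (after J b) := by
      ext x
      simp only [after, Finset.mem_filter, Finset.mem_insert]
      constructor
      · rintro ⟨⟨hx, -⟩, hbx⟩
        exact hbx.eq_or_lt.imp Eq.symm fun h => ⟨hx, h⟩
      · rintro (rfl | ⟨hx, hbx⟩)
        · exact ⟨⟨hb, hab⟩, le_rfl⟩
        · exact ⟨⟨hx, hab.trans hbx⟩, hbx.le⟩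
    rw [this, entry_insert k b (after J b) fun x hx => (Finset.mem_filter.1 hx).2]
  · congr 1
    ext x
    simp only [after, Finset.mem_filter]
    constructor
    · rintro ⟨⟨hx, -⟩, hbx⟩
      exact ⟨hx, lt_of_le_of_ne hbx fun h => hb (h ▸ hx)⟩
    · rintro ⟨hx, hbx⟩
      exact ⟨⟨hx, hab.trans hbx⟩, hbx.le⟩

/-- The letter of `(r, c)` acts on positions `k - r + c - 1` and `k - r + c`; the corresponding entries
of the inverse of the product of the letters after `(r, c)` label the pipes through its bottom and
right edges. -/
theorem isPipeLabelling_entry (k m : ℕ) (J : Finset (ℕ ×ₗ ℕ))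
    (hJ : ∀ b ∈ J, 1 ≤ (ofLex b).1 ∧ (ofLex b).1 ≤ k ∧ 1 ≤ (ofLex b).2 ∧ (ofLex b).2 ≤ m) :
    IsPipeLabelling k m (fun r c => toLex (r, c) ∈ J)
      (fun r c => entry k (after J (toLex (r, c))) (k - r + c - 1))
      (fun r c => entry k (after J (toLex (r, c))) (k - r + c)) := by
  have vert : ∀ r c, 1 ≤ r → r + 1 ≤ k → 1 ≤ c → c ≤ m →
      entry k (after J (toLex (r, c))) (k - r + c - 1) = if toLex (r + 1, c) ∈ J
        then entry k (after J (toLex (r + 1, c))) (k - (r + 1) + c - 1)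
        else entry k (after J (toLex (r + 1, c))) (k - (r + 1) + c) := by
    intro r c hr hrk hc hcm
    have hi : k - r + c - 1 = letter k (toLex (r + 1, c)) := by
      simp only [letter, ofLex_toLex]; omega
    rw [entry_after k J (k - r + c - 1) (b := toLex (r + 1, c))
      (Prod.Lex.toLex_lt_toLex.2 (Or.inl (by simp)))]
    · rw [hi, swap_apply_right]
      rfl
    · intro x hx h1 h2
      have := hJ x hx
      rw [Prod.Lex.lt_iff] at h1 h2
      simp only [ofLex_toLex, letter] at h1 h2 ⊢
      omega
  have horiz : ∀ r c, 1 ≤ r → r ≤ k → 1 ≤ c → c + 1 ≤ m →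
      entry k (after J (toLex (r, c))) (k - r + c) = if toLex (r, c + 1) ∈ J
        then entry k (after J (toLex (r, c + 1))) (k - r + (c + 1))
        else entry k (after J (toLex (r, c + 1))) (k - r + (c + 1) - 1) := by
    intro r c hr hrk hc hcm
    have hi : k - r + c = letter k (toLex (r, c + 1)) - 1 := by
      simp only [letter, ofLex_toLex]; omega
    rw [entry_after k J (k - r + c) (b := toLex (r, c + 1))
      (Prod.Lex.toLex_lt_toLex.2 (Or.inr (by simp)))]
    · rw [hi, swap_apply_left]
      rfl
    · intro x hx h1 h2
      rw [Prod.Lex.lt_iff] at h1 h2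
      simp only [ofLex_toLex] at h1 h2
      omega
  refine ⟨?_, ?_, ?_, ?_, ?_, ?_⟩
  · intro r c hr hrk hc hcm hX
    exact (vert r c hr hrk hc hcm).trans (if_pos hX)
  · intro r c hr hrk hc hcm hX
    exact (vert r c hr hrk hc hcm).trans (if_neg hX)
  · intro r c hr hrk hc hcm hX
    exact (horiz r c hr hrk hc hcm).trans (if_pos hX)
  · intro r c hr hrk hc hcm hX
    exact (horiz r c hr hrk hc hcm).trans (if_neg hX)
  · intro c hc hcm
    refine (entry_eq_self k _ _ fun x hx => ?_).trans (by omega)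
    obtain ⟨hx, h1⟩ := Finset.mem_filter.1 hx
    have := hJ x hx
    rw [Prod.Lex.lt_iff] at h1
    simp only [ofLex_toLex, letter] at h1 ⊢
    omega
  · intro r hr hrk
    refine entry_eq_self k _ _ fun x hx => ?_
    obtain ⟨hx, h1⟩ := Finset.mem_filter.1 hx
    have := hJ x hx
    rw [Prod.Lex.lt_iff] at h1
    simp only [ofLex_toLex, letter] at h1 ⊢
    omega

end

/-- **Postnikov's `⌶`-characterization of leftmost reduced subwords of Grassmannian
permutations.**  Fix `1 ≤ k ≤ n` and a partition `λ` inside the `k × (n-k+1)`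
rectangle, whose boxes `(r,c)` carry the letters `s_{k-r+c}` of the symmetric group
`S_{n+1}`; row-reading the boxes of `λ` gives a reduced word `u_λ` for a
`k`-Grassmannian permutation.  For a subset `J` of the boxes of `λ`, the row-reading
word `u_J` is reduced and `J` is the leftmost reduced subword (lexicographically
first, in row-reading order, among all subsets of boxes of `λ` whose row-reading word
is a reduced word for the same permutation) for the permutation it represents, if and
only if `J` contains no bad `⌶`. -/
theorem leftmost_reduced_subword_iff_no_bad_jot
    (n k : ℕ) (hk : 1 ≤ k) (hkn : k ≤ n) (lam : ℕ → ℕ)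
    (hmono : ∀ r r' : ℕ, 1 ≤ r → r ≤ r' → r' ≤ k → lam r' ≤ lam r)
    (hlam : lam 1 ≤ n - k + 1)
    (J : Finset (ℕ ×ₗ ℕ)) (hJ : ∀ b ∈ J, IsBoxOf k lam (ofLex b)) :
    (IsReducedWord n (rowReadingWord k J) ∧
      ∀ J' : Finset (ℕ ×ₗ ℕ), (∀ b ∈ J', IsBoxOf k lam (ofLex b)) →
        IsReducedWord n (rowReadingWord k J') →
        ((rowReadingWord k J').map (adjTransposition n)).prod =
          ((rowReadingWord k J).map (adjTransposition n)).prod →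
        (J = J' ∨ List.Lex (· < ·) (J.sort (· ≤ ·)) (J'.sort (· ≤ ·)))) ↔
    ¬ HasBadJot k lam J := by
  have hbox : ∀ b, IsBoxOf k lam b → 1 ≤ b.1 ∧ b.1 ≤ k ∧ 1 ≤ b.2 ∧ b.2 ≤ n - k + 1 :=
    fun b hb => ⟨hb.1, hb.2.1, hb.2.2.1,
      (hb.2.2.2.trans (hmono 1 b.1 le_rfl hb.1 hb.2.1)).trans hlam⟩
  have hNW : ∀ r c r' c', IsBoxOf k lam (r, c) → 1 ≤ r' → r' ≤ r → 1 ≤ c' → c' ≤ c →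
      IsBoxOf k lam (r', c') := fun r c r' c' hb h1 h2 h3 h4 =>
    ⟨h1, h2.trans hb.2.1, h3, (h4.trans hb.2.2.2).trans (hmono r' r h1 h2 hb.2.1)⟩
  have hletter : ∀ b, IsBoxOf k lam (ofLex b) → 1 ≤ letter k b ∧ letter k b ≤ n := by
    intro b hb
    have := hbox _ hb
    simp only [letter]
    omega
  have hword : ∀ i ∈ rowReadingWord k J, 1 ≤ i ∧ i ≤ n := by
    intro i hi
    obtain ⟨b, hb, rfl⟩ := List.mem_map.1 hi
    exact hletter b (hJ b ((J.mem_sort _).1 hb))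
  have hpipe := isPipeLabelling_entry k (n - k + 1) J fun b hb => hbox _ (hJ b hb)
  constructor
  · rintro ⟨hred, hleft⟩ ⟨b, hb, r', c', hr', hbr, hrJ, hc', hbc, hcJ⟩
    have hasc : ∀ a, IsBoxOf k lam (ofLex a) → AscentAt k J a := fun a ha =>
      ascentAt_of_leftmost n k J a (hletter a ha) hred fun J' hJ' => hleft J' fun x hx => by
        rcases Finset.mem_insert.1 (hJ' hx) with rfl | hx
        · exact ha
        · exact hJ x hx
    have hbL := hJ b hb
    have hbb := hbox _ hbL
    exact hpipe.not_bad_of_lt _ _ _ _ _ rfl hbr.1 hr' hbb.2.1 hbc.2.2.1 hc' hbb.2.2.2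
      (fun x y hx hxr hy hyc => hasc (toLex (x, y)) (hNW _ _ x y hbL hx hxr hy hyc))
      hb hrJ hcJ
  · intro hbad
    have hasc : ∀ a, IsBoxOf k lam (ofLex a) → AscentAt k J a := by
      intro a ha
      have hab := hbox _ ha
      refine hpipe.lt_of_no_bad (fun r c r' c' h1 h2 h3 h4 h5 h6 hX => ?_) k
        (ofLex a).1 (ofLex a).2 (ofLex a).1 (ofLex a).2 (by omega) hab.1 le_rfl hab.2.1
        hab.2.2.1 le_rfl hab.2.2.2
      by_contra hn
      rw [not_or] at hn
      have hb := hJ _ hX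
      exact hbad ⟨toLex (r, c), hX, r', c', h2, hNW r c r' c hb h1 h2.le hb.2.2.1 le_rfl, hn.1,
        h5, hNW r c r c' hb hb.1 le_rfl h4 h5.le, hn.2⟩
    refine ⟨(isReducedWord_iff_ascending n _).2 ⟨hword, (ascending_iff k J).2
      fun b hb => hasc b (hJ b hb)⟩, fun J' hJ' hred' heq => ?_⟩
    refine lex_of_ascentAt n k J J' hword (fun b hb => ?_) hred' heq
    rcases Finset.mem_union.1 hb with hb | hb
    · exact hasc b (hJ b hb)
    · exact hasc b (hJ' b hb)
end

section
/- Let E be a finite set equipped with a total order, and let 𝒜 be a collection of subsets of E such that ∅ ∈ 𝒜 and such that for all A, B ∈ 𝒜 with B not contained in A, the set A ∪ {x} belongs to 𝒜, where x is the minimum element of B ∖ A with respect to the total order. Then 𝒜 is accessible: for every nonempty A ∈ 𝒜 there exists x ∈ A with A ∖ {x} ∈ 𝒜. -/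
/-- **Accessibility of supersolvable antimatroids.**
Let `E` be a finite set equipped with a total order, and let `𝒜` be a collection of
subsets of `E` such that `∅ ∈ 𝒜` and such that for all `A, B ∈ 𝒜` with `B` not contained
in `A`, the set `A ∪ {x}` belongs to `𝒜`, where `x` is the minimum element of `B \ A`.
Then `𝒜` is accessible: every nonempty `A ∈ 𝒜` has an element `x` with `A \ {x} ∈ 𝒜`. -/
theorem accessible_of_supersolvable_exchange
    {E : Type*} [Fintype E] [LinearOrder E] (𝒜 : Set (Finset E))
    (hempty : ∅ ∈ 𝒜)
    (hexch : ∀ A ∈ 𝒜, ∀ B ∈ 𝒜, ∀ h : ¬ B ⊆ A,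
      insert ((B \ A).min' (Finset.sdiff_nonempty.mpr h)) A ∈ 𝒜) :
    ∀ A ∈ 𝒜, A.Nonempty → ∃ x ∈ A, A.erase x ∈ 𝒜 := by
  classical
  intro A hA hne
  -- A maximal feasible proper subset `C` of `A`: exchanging it against `A` adds one element
  -- of `A`, and by maximality the result is `A` itself.
  obtain ⟨C, hC⟩ := (Set.toFinite {C : Finset E | C ∈ 𝒜 ∧ C ⊂ A}).exists_maximal
    ⟨∅, hempty, Finset.empty_ssubset.mpr hne⟩
  obtain ⟨hC𝒜, hCA⟩ := hC.prop
  have hnot : ¬ A ⊆ C := hCA.2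
  have hins := hexch C hC𝒜 A hA hnot
  have hx := Finset.min'_mem (A \ C) (Finset.sdiff_nonempty.mpr hnot)
  set x := (A \ C).min' (Finset.sdiff_nonempty.mpr hnot)
  obtain ⟨hxA, hxC⟩ := Finset.mem_sdiff.mp hx
  have hsub : insert x C ⊆ A := Finset.insert_subset hxA hCA.1
  have heq : insert x C = A := by
    by_contra hneq
    exact hxC (hC.le_of_ge ⟨hins, hsub.ssubset_of_ne hneq⟩ (Finset.subset_insert x C)
      (Finset.mem_insert_self x C))
  exact ⟨x, hxA, by rwa [← heq, Finset.erase_insert hxC]⟩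
end
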